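/- arXiv:2102.04094 — 2 statements merged into one kernel-verified Lean document; each statement's English description precedes it below -/
import Mathlib

section
/- If n, a and r are integers with n = 2a + r, 3 ≤ a ≤ ⌊n/2⌋ and 2 ≤ r < a, then C(n;1,a) admits a 2-bounded independent broadcast of maximum cost, i.e., there is an independent broadcast f with σ(f) = β_b(C(n;1,a)) and f(v) ≤ 2 for every vertex v. -/
/-- The eccentricity of a vertex: maximum distance to any other vertex. -/
noncomputable def eccent {V : Type*} [Fintype V] (G : SimpleGraph V) (v : V) : ℕ :=
  Finset.univ.sup (fun u => G.dist v u)

/-- The diameter of a finite graph: maximum eccentricity. -/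
noncomputable def graphDiam {V : Type*} [Fintype V] (G : SimpleGraph V) : ℕ :=
  Finset.univ.sup (fun v => eccent G v)

/-- `f` is an independent broadcast on `G`. -/
def IsIndepBroadcast {V : Type*} [Fintype V] (G : SimpleGraph V) (f : V → ℕ) : Prop :=
  (∀ v, f v ≤ eccent G v) ∧
  ∀ u v : V, u ≠ v → 0 < f u → 0 < f v → max (f u) (f v) < G.dist u v

/-- The broadcast independence number: maximum cost of an independent broadcast. -/
noncomputable def betaB {V : Type*} [Fintype V] (G : SimpleGraph V) : ℕ :=
  sSup {k | ∃ f : V → ℕ, IsIndepBroadcast G f ∧ ∑ v, f v = k}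

/-- The independence number: maximum size of an independent set. -/
noncomputable def alphaNum {V : Type*} [Fintype V] (G : SimpleGraph V) : ℕ :=
  sSup {k | ∃ s : Finset V, (∀ u ∈ s, ∀ v ∈ s, ¬ G.Adj u v) ∧ s.card = k}

/-- The circulant graph `C(n;1,a)` on vertices `v_0,…,v_{n-1}` with edges
`v_i v_{i+1}` and `v_i v_{i+a}`, indices mod `n`. -/
def circulantGraph (n a : ℕ) : SimpleGraph (Fin n) :=
  SimpleGraph.fromRel (fun i j => (i.val + 1) % n = j.val ∨ (i.val + a) % n = j.val)

/-!
Start from a broadcast of maximum cost and replace each value `k ≥ 3` at a vertex `v` by the value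
`1` on `k` pairwise non-adjacent vertices at distance at most `p = ⌊(k - 1) / 2⌋` from `v`. Two
distinct vertices carrying `k` and `l` are more than `max k l` apart, so the vertices replacing them
stay at distance at least `2`.

The `k ≤ 2 * p + 2` vertices exist because `k` is at most the eccentricity, which is at most
`⌊(a + 1) / 2⌋`. This makes `p` so small compared with `a` that the ball of radius `p` is an
`ℓ¹`-ball of the lattice `ℤ²`, mapped by `(x, y) ↦ x + y * a` and folded only along `(r, 2) ↦ 0`.
If `r` is even or `r ≥ 2 * p`, a checkerboard pattern has enough room. If `r` is odd and small, the
folding creates odd cycles of length `r + 2`, and the folded ball maps homomorphically to such a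
cycle. The largest independent sets of the cycle have `(r + 1) / 2` vertices, and the folded ball is
so large that the preimage of an average rotation of one of them has more than `2 * p + 1` points.
-/

section Broadcast

variable {V : Type*} {G : SimpleGraph V}

/-- `HasBallIndepSet G v p m`: the closed ball of radius `p` around `v` contains an independent set
of at least `m` vertices. These sets replace the large values of a broadcast. -/
def HasBallIndepSet (G : SimpleGraph V) (v : V) (p m : ℕ) : Prop :=
  ∃ S : Finset V, m ≤ S.card ∧ (∀ w ∈ S, G.dist v w ≤ p) ∧ G.IsIndepSet S

theorem HasBallIndepSet.mono {v : V} {p m k : ℕ} (h : HasBallIndepSet G v p m) (hkm : k ≤ m) :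
    HasBallIndepSet G v p k :=
  let ⟨S, hcard, hS⟩ := h
  ⟨S, hkm.trans hcard, hS⟩

/-- The value given to each vertex that shares a broadcast value `k`: values up to `2` stay in
place, larger ones are split into units. -/
def splitWeight (k : ℕ) : ℕ := if k ≤ 2 then k else 1

theorem splitWeight_le_two (k : ℕ) : splitWeight k ≤ 2 := by
  unfold splitWeight
  split_ifs <;> omega

theorem max_splitWeight_lt_dist (hG : G.Connected) {u v w x : V} {k l : ℕ}
    (huv : max k l < G.dist u v) (hw : 2 * G.dist u w < k) (hx : 2 * G.dist v x < l) :
    max (splitWeight k) (splitWeight l) < G.dist w x := by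
  have huw : G.dist u v ≤ G.dist u w + G.dist w v := hG.dist_triangle
  have hwv : G.dist w v ≤ G.dist w x + G.dist v x :=
    G.dist_comm (u := v) (v := x) ▸ hG.dist_triangle
  unfold splitWeight
  split_ifs <;> omega

variable [Fintype V]

theorem dist_le_eccent (v w : V) : G.dist v w ≤ eccent G v :=
  Finset.le_sup (f := G.dist v) (Finset.mem_univ w)

theorem bddAbove_indepBroadcast_costs (G : SimpleGraph V) :
    BddAbove {k | ∃ f : V → ℕ, IsIndepBroadcast G f ∧ ∑ v, f v = k} := by
  refine ⟨∑ v, eccent G v, ?_⟩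
  rintro _ ⟨f, hf, rfl⟩
  exact Finset.sum_le_sum fun v _ ↦ hf.1 v

theorem IsIndepBroadcast.sum_le_betaB {f : V → ℕ} (hf : IsIndepBroadcast G f) :
    ∑ v, f v ≤ betaB G :=
  le_csSup (bddAbove_indepBroadcast_costs G) ⟨f, hf, rfl⟩

theorem exists_isIndepBroadcast_sum_eq_betaB (G : SimpleGraph V) :
    ∃ f : V → ℕ, IsIndepBroadcast G f ∧ ∑ v, f v = betaB G :=
  Nat.sSup_mem (s := {k | ∃ f : V → ℕ, IsIndepBroadcast G f ∧ ∑ v, f v = k})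
    ⟨0, fun _ ↦ 0, ⟨by simp, by simp⟩, by simp⟩ (bddAbove_indepBroadcast_costs G)

theorem exists_isIndepBroadcast_of_family {ι : Type*} [Fintype ι] {φ : ι → V} {c : ι → ℕ}
    (hecc : ∀ i, c i ≤ eccent G (φ i))
    (hdist : Pairwise fun i j ↦ max (c i) (c j) < G.dist (φ i) (φ j)) :
    ∃ g : V → ℕ, IsIndepBroadcast G g ∧ ∑ v, g v = ∑ i, c i ∧ ∀ v, g v = 0 ∨ ∃ i, g v = c i := by
  have hφ : φ.Injective := by
    intro i j hij
    by_contra hne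
    simpa [hij] using hdist hne
  let g := Function.extend φ c 0
  have hg : ∀ i, g (φ i) = c i := hφ.extend_apply c 0
  have hg_zero : ∀ v ∉ Set.range φ, g v = 0 := fun v hv ↦ Function.extend_apply' _ _ _ hv
  refine ⟨g, ⟨fun v ↦ ?_, fun u v huv hu hv ↦ ?_⟩, ?_, fun v ↦ ?_⟩
  · by_cases hv : v ∈ Set.range φ
    · obtain ⟨i, rfl⟩ := hv
      exact (hg i).trans_le (hecc i)
    · simp [hg_zero v hv]
  · obtain ⟨i, rfl⟩ : u ∈ Set.range φ := of_not_not (mt (hg_zero u) hu.ne')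
    obtain ⟨j, rfl⟩ : v ∈ Set.range φ := of_not_not (mt (hg_zero v) hv.ne')
    rw [hg, hg]
    exact hdist (ne_of_apply_ne φ huv)
  · exact (Fintype.sum_of_injective φ hφ c g hg_zero fun i ↦ (hg i).symm).symm
  · by_cases hv : v ∈ Set.range φ
    · obtain ⟨i, rfl⟩ := hv
      exact Or.inr ⟨i, hg i⟩
    · exact Or.inl (hg_zero v hv)

theorem exists_split_of_hasBallIndepSet (hG : G.Connected) {v : V} {k : ℕ} (hk : k ≤ eccent G v)
    (hball : 3 ≤ k → HasBallIndepSet G v ((k - 1) / 2) k) :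
    ∃ S : Finset V, k ≤ S.card * splitWeight k ∧ (∀ w ∈ S, 2 * G.dist v w < k) ∧
      (∀ w ∈ S, splitWeight k ≤ eccent G w) ∧
      ∀ w ∈ S, ∀ x ∈ S, w ≠ x → splitWeight k < G.dist w x := by
  rcases Nat.eq_zero_or_pos k with rfl | hpos
  · exact ⟨∅, by simp⟩
  rcases le_or_gt k 2 with h2 | h3
  · refine ⟨{v}, ?_⟩
    simpa [splitWeight, h2, hpos] using hk
  · obtain ⟨S, hcard, hdist, hindep⟩ := hball h3
    have hweight : splitWeight k = 1 := if_neg h3.not_ge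
    simp only [hweight, mul_one]
    refine ⟨S, hcard, fun w hw ↦ ?_, fun w _ ↦ ?_, fun w hw x hx hne ↦ ?_⟩
    · have := hdist w hw
      omega
    · obtain ⟨x, -, hne⟩ := Finset.exists_mem_ne (show 1 < S.card by omega) w
      exact (hG.pos_dist_of_ne hne.symm).trans_le (dist_le_eccent w x)
    · exact hG.one_lt_dist_of_ne_of_not_adj hne (hindep hw hx hne)

theorem IsIndepBroadcast.exists_le_two (hG : G.Connected)
    (hball : ∀ v k, 3 ≤ k → k ≤ eccent G v → HasBallIndepSet G v ((k - 1) / 2) k)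
    {f : V → ℕ} (hf : IsIndepBroadcast G f) :
    ∃ g : V → ℕ, IsIndepBroadcast G g ∧ ∑ v, f v ≤ ∑ v, g v ∧ ∀ v, g v ≤ 2 := by
  choose S hcard hdist hecc hsep using fun v ↦
    exists_split_of_hasBallIndepSet hG (hf.1 v) fun h3 ↦ hball v (f v) h3 (hf.1 v)
  let weight : (Σ v, S v) → ℕ := fun i ↦ splitWeight (f i.1)
  obtain ⟨g, hg, hsum, hval⟩ := exists_isIndepBroadcast_of_family (G := G) (c := weight)
    (φ := fun i ↦ i.2) (fun i ↦ hecc i.1 i.2 i.2.2) (by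
      rintro ⟨u, w, hw⟩ ⟨v, x, hx⟩ hne
      by_cases huv : u = v
      · subst huv
        simpa [weight] using hsep u w hw x hx fun hwx ↦ hne (by simp [hwx])
      · have hu := hdist u w hw
        have hv := hdist v x hx
        exact max_splitWeight_lt_dist hG (hf.2 u v huv (by omega) (by omega)) hu hv)
  refine ⟨g, hg, ?_, fun v ↦ ?_⟩
  · rw [hsum, Fintype.sum_sigma]
    refine Finset.sum_le_sum fun v _ ↦ ?_
    simpa [weight] using hcard v
  · rcases hval v with h | ⟨i, h⟩
    · omega
    · exact h.trans_le (splitWeight_le_two _)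

theorem exists_isIndepBroadcast_sum_eq_betaB_le_two (hG : G.Connected)
    (hball : ∀ v k, 3 ≤ k → k ≤ eccent G v → HasBallIndepSet G v ((k - 1) / 2) k) :
    ∃ f : V → ℕ, IsIndepBroadcast G f ∧ ∑ v, f v = betaB G ∧ ∀ v, f v ≤ 2 := by
  obtain ⟨f, hf, hcost⟩ := exists_isIndepBroadcast_sum_eq_betaB G
  obtain ⟨g, hg, hle, hg2⟩ := hf.exists_le_two hG hball
  exact ⟨g, hg, hg.sum_le_betaB.antisymm (hcost ▸ hle), hg2⟩

end Broadcast

section Cayley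

variable {A : Type*} [AddCommGroup A] {s : Set A}

theorem edist_add_nsmul_le {g : A} (hg : g ∈ s) (u : A) (m : ℕ) :
    (SimpleGraph.circulantGraph s).edist u (u + m • g) ≤ m := by
  induction m with
  | zero => simp
  | succ m ih =>
    have hstep : (SimpleGraph.circulantGraph s).edist (u + m • g) (u + (m + 1) • g) ≤ 1 := by
      rw [SimpleGraph.edist_le_one_iff_adj_or_eq, SimpleGraph.circulantGraph_adj]
      by_cases h : u + m • g = u + (m + 1) • g
      · exact Or.inr h
      · exact Or.inl ⟨h, Or.inr (by simpa [succ_nsmul] using hg)⟩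
    push_cast
    exact SimpleGraph.edist_triangle.trans (add_le_add ih hstep)

theorem edist_add_zsmul_le {g : A} (hg : g ∈ s) (u : A) (m : ℤ) :
    (SimpleGraph.circulantGraph s).edist u (u + m • g) ≤ m.natAbs := by
  obtain ⟨k, rfl | rfl⟩ := m.eq_nat_or_neg
  · simpa using edist_add_nsmul_le hg u k
  · simpa [SimpleGraph.edist_comm] using edist_add_nsmul_le hg (u + (-k : ℤ) • g) k

theorem hasBallIndepSet_of_sub_notMem {ι : Type*} [Fintype ι] {v : A} {p : ℕ} {δ : ι → A}
    (hdist : ∀ i, (SimpleGraph.circulantGraph s).dist v (v + δ i) ≤ p)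
    (hsub : Pairwise fun i j ↦ δ i - δ j ∉ insert 0 s) :
    HasBallIndepSet (SimpleGraph.circulantGraph s) v p (Fintype.card ι) := by
  have hδ : (fun i ↦ v + δ i).Injective := by
    intro i j hij
    by_contra hne
    exact hsub hne (Or.inl (sub_eq_zero.mpr (add_left_cancel hij)))
  refine ⟨Finset.univ.map ⟨_, hδ⟩, by simp, by simpa using hdist, ?_⟩
  simp only [SimpleGraph.IsIndepSet, Finset.coe_map, Function.Embedding.coeFn_mk,
    Finset.coe_univ, Set.image_univ]
  rintro _ ⟨i, rfl⟩ _ ⟨j, rfl⟩ hne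
  have hij : i ≠ j := ne_of_apply_ne (fun i ↦ v + δ i) hne
  rw [SimpleGraph.circulantGraph_adj, add_sub_add_left_eq_sub, add_sub_add_left_eq_sub]
  rintro ⟨-, h | h⟩
  · exact hsub hij (Or.inr h)
  · exact hsub hij.symm (Or.inr h)

end Cayley

section Averaging

theorem exists_translate_card_mul_card_le {ι H : Type*} [AddGroup H] [Fintype H] [DecidableEq H]
    (W : Finset ι) (φ : ι → H) (R : Finset H) :
    ∃ c, W.card * R.card ≤ Fintype.card H * (W.filter fun t ↦ φ t + c ∈ R).card := by
  have hfiber : ∀ t, (Finset.univ.filter fun c ↦ φ t + c ∈ R).card = R.card := fun t ↦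
    Finset.card_bij (fun c _ ↦ φ t + c) (by simp) (by simp)
      fun s hs ↦ ⟨-φ t + s, by simpa using hs, by simp⟩
  have hsum : ∑ c, (W.filter fun t ↦ φ t + c ∈ R).card = W.card * R.card := by
    simp only [Finset.card_filter]
    rw [Finset.sum_comm, Finset.sum_const_nat]
    intro t _
    rw [← Finset.card_filter, hfiber]
  obtain ⟨c, -, hc⟩ := Finset.exists_le_of_sum_le (Finset.univ_nonempty (α := H))
    (f := fun _ ↦ W.card * R.card)
    (g := fun c ↦ Fintype.card H * (W.filter fun t ↦ φ t + c ∈ R).card)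
    (by simp only [Finset.sum_const, Finset.card_univ, smul_eq_mul, ← Finset.mul_sum, hsum,
      le_refl])
  exact ⟨c, hc⟩

theorem exists_card_eq_half_add_one_notMem (m : ℕ) :
    ∃ R : Finset (ZMod m), R.card = m / 2 ∧ ∀ s ∈ R, s + 1 ∉ R := by
  have hval : ∀ k < m, (k : ZMod m).val = k := fun k hk ↦ ZMod.val_natCast_of_lt hk
  refine ⟨(Finset.range (m / 2)).image fun j : ℕ ↦ ((2 * j : ℕ) : ZMod m), ?_, ?_⟩
  · rw [Finset.card_image_of_injOn, Finset.card_range]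
    intro i hi j hj hij
    simp only [Finset.coe_range, Set.mem_Iio] at hi hj
    have := congr_arg ZMod.val hij
    rw [hval _ (by omega), hval _ (by omega)] at this
    omega
  · simp only [Finset.mem_image, Finset.mem_range]
    rintro _ ⟨i, hi, rfl⟩ ⟨j, hj, hij⟩
    have := congr_arg ZMod.val hij
    rw [← Nat.cast_add_one, hval _ (by omega), hval _ (by omega)] at this
    omega

theorem exists_subset_forall_sub_ne {ι : Type*} {m : ℕ} [NeZero m] (W : Finset ι) (φ : ι → ZMod m)
    {u : ZMod m} (hu : IsUnit u) :
    ∃ T ⊆ W, W.card * (m / 2) ≤ m * T.card ∧ ∀ i ∈ T, ∀ j ∈ T, φ j - φ i ≠ u := by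
  obtain ⟨R, hR, hsucc⟩ := exists_card_eq_half_add_one_notMem m
  obtain ⟨w, hw⟩ := hu.exists_left_inv
  obtain ⟨c, hc⟩ := exists_translate_card_mul_card_le W (fun i ↦ w * φ i) R
  rw [hR, ZMod.card] at hc
  refine ⟨_, Finset.filter_subset _ _, hc, fun i hi j hj hij ↦ ?_⟩
  apply hsucc _ (Finset.mem_filter.mp hi).2
  convert (Finset.mem_filter.mp hj).2 using 1
  linear_combination -w * hij - hw

end Averaging

section IntegerArithmetic

theorem eq_zero_or_eq_or_eq_neg_of_dvd {d m : ℤ} (h : m ∣ d) (hlb : -(2 * m) < d)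
    (hub : d < 2 * m) : d = 0 ∨ d = m ∨ d = -m := by
  obtain ⟨c, rfl⟩ := h
  have hc1 : c < 2 := by nlinarith
  have hc2 : -2 < c := by nlinarith
  obtain rfl | rfl | rfl : c = -1 ∨ c = 0 ∨ c = 1 := by omega
  all_goals simp

theorem eq_of_dvd_mul_sub {n a b : ℕ} (hn : n = 2 * a + (2 * b + 1)) {d e : ℤ}
    (hd : d.natAbs + 2 ≤ 2 * a) (he : e = 0 ∨ e = 1 ∨ e = a)
    (hdvd : (n : ℤ) ∣ d * (a + b + 1) - e) : d = 0 ∨ d = 2 ∨ d = -(2 * b + 1) := by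
  have htwo : d - 2 * e = 2 * (d * (a + b + 1) - e) - n * d := by
    rw [hn]
    push_cast
    ring
  have hdvd' : (n : ℤ) ∣ d - 2 * e := htwo ▸ dvd_sub (hdvd.mul_left 2) (dvd_mul_right _ _)
  have hcases := eq_zero_or_eq_or_eq_neg_of_dvd hdvd' (by omega) (by omega)
  omega

theorem exists_two_mul_add_mul_of_le {b p t : ℕ} (hb : 1 ≤ b) (hbp : b + 1 ≤ p)
    (ht : t ≤ 2 * p + 2 * b) :
    ∃ x y : ℤ, t = 2 * x + (2 * b + 1) * y ∧ x.natAbs + y.natAbs ≤ p := by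
  obtain ⟨c, rfl | rfl⟩ := t.even_or_odd'
  · rcases le_or_gt c p with hcp | hcp
    · exact ⟨c, 0, by push_cast; ring, by omega⟩
    · exact ⟨c - (2 * b + 1), 2, by push_cast; ring, by omega⟩
  · exact ⟨c - b, 1, by push_cast; ring, by omega⟩

theorem exists_two_mul_add_mul {b p M : ℕ} (hb : 1 ≤ b) (hbp : b + 1 ≤ p)
    (hM : M ≤ 2 * b ∨ M * (b + 1) ≤ 2 * p) {t : ℤ} (ht : t.natAbs ≤ 2 * p + M) :
    ∃ x y : ℤ, t = 2 * x + (2 * b + 1) * y ∧ x.natAbs + y.natAbs ≤ p := by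
  suffices hnat : ∀ k : ℕ, k ≤ 2 * p + M →
      ∃ x y : ℤ, k = 2 * x + (2 * b + 1) * y ∧ x.natAbs + y.natAbs ≤ p by
    obtain ⟨x, y, hk, hxy⟩ := hnat t.natAbs ht
    rcases Int.natAbs_eq t with h | h
    · exact ⟨x, y, by rw [h, hk], hxy⟩
    · exact ⟨-x, -y, by rw [h, hk]; ring, by simpa using hxy⟩
  intro k hk
  rcases le_or_gt k (2 * p + 2 * b) with hkb | hkb
  · exact exists_two_mul_add_mul_of_le hb hbp hkb
  · obtain ⟨j, rfl⟩ : ∃ j, k = 2 * p + j := ⟨k - 2 * p, by omega⟩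
    have hj : j * (b + 1) ≤ 2 * p :=
      (Nat.mul_le_mul_right _ (by omega : j ≤ M)).trans (hM.resolve_left (by omega))
    have hbj : j ≤ b * j := Nat.le_mul_of_pos_left j hb
    refine ⟨p - b * j, j, by push_cast; ring, ?_⟩
    rw [mul_add_one, mul_comm] at hj
    zify at hj hbj
    generalize (b * j : ℤ) = m at *
    omega

theorem exists_interval_excess {b p : ℕ} (hb : 1 ≤ b) (hbp : b + 1 ≤ p) :
    ∃ M ≤ p, (M ≤ 2 * b ∨ M * (b + 1) ≤ 2 * p) ∧
      (2 * p + 1) * (2 * b + 3) < (4 * p + 2 * M + 1) * (b + 1) := by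
  rcases lt_trichotomy (2 * p) (3 * b + 2) with h | h | h
  · exact ⟨2, by omega, Or.inl (by omega), by nlinarith⟩
  · exact ⟨3, by omega, Or.inl (by omega), by nlinarith⟩
  · have hle : 2 * p / (b + 1) * (b + 1) ≤ 2 * p := Nat.div_mul_le_self _ _
    have hlt : 2 * p < 2 * p / (b + 1) * (b + 1) + (b + 1) := Nat.lt_div_mul_add (by omega)
    refine ⟨2 * p / (b + 1), ?_, Or.inr hle, ?_⟩
    · exact Nat.div_le_of_le_mul (by nlinarith)
    · generalize 2 * p / (b + 1) = M at *
      nlinarith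

end IntegerArithmetic

namespace circulantGraph

open scoped Fin.CommRing

variable {n a : ℕ} [NeZero n]

theorem eq_circulantGraph_pair :
    circulantGraph n a = SimpleGraph.circulantGraph ({1, (a : Fin n)} : Set (Fin n)) := by
  have hmod : ∀ (u v : Fin n) (k : ℕ), (u.val + k) % n = v.val ↔ v - u = k := by
    intro u v k
    rw [sub_eq_iff_eq_add', Fin.ext_iff, Fin.val_add, Fin.coe_natCast_eq_mod, Nat.add_mod_mod,
      eq_comm]
  ext u v
  simp only [circulantGraph, SimpleGraph.fromRel_adj, SimpleGraph.circulantGraph_adj, hmod,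
    Nat.cast_one, Set.mem_insert_iff, Set.mem_singleton_iff, ne_eq]
  tauto

theorem edist_add_le (u : Fin n) (x y : ℤ) :
    (circulantGraph n a).edist u (u + (x + y * a : ℤ)) ≤ (x.natAbs + y.natAbs : ℕ) := by
  rw [eq_circulantGraph_pair]
  have hx := edist_add_zsmul_le (s := {1, (a : Fin n)}) (Or.inl rfl) u x
  have hy := edist_add_zsmul_le (s := {1, (a : Fin n)}) (Or.inr rfl) (u + x • 1) y
  have hsum : u + x • 1 + y • (a : Fin n) = u + (x + y * a : ℤ) := by
    simp only [zsmul_eq_mul, mul_one]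
    push_cast
    ring
  rw [hsum] at hy
  rw [Nat.cast_add]
  exact SimpleGraph.edist_triangle.trans (add_le_add hx hy)

theorem connected : (circulantGraph n a).Connected := by
  have hreach : ∀ v : Fin n, (circulantGraph n a).Reachable 0 v := by
    intro v
    have hle := edist_add_le (a := a) (0 : Fin n) v.val 0
    rw [show (0 : Fin n) + ((v.val : ℤ) + 0 * a : ℤ) = v by simp] at hle
    exact SimpleGraph.reachable_of_edist_ne_top (ne_top_of_le_ne_top (ENat.natCast_ne_top _) hle)
  exact .mk fun u v ↦ (hreach u).symm.trans (hreach v)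

theorem dist_add_le (u : Fin n) {z x y : ℤ} (hz : (n : ℤ) ∣ z - (x + y * a)) :
    (circulantGraph n a).dist u (u + (z : Fin n)) ≤ x.natAbs + y.natAbs := by
  have hcast : (z : Fin n) = (x + y * a : ℤ) := by
    rw [← sub_eq_zero, ← Int.cast_sub]
    exact (CharP.intCast_eq_zero_iff (Fin n) n _).mpr hz
  have hle := edist_add_le (a := a) u x y
  rw [← hcast, ← (connected _ _).coe_dist_eq_edist] at hle
  exact_mod_cast hle

theorem eccent_le_half {r : ℕ} (hn : n = 2 * a + r) (hra : r < a) (u : Fin n) :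
    eccent (circulantGraph n a) u ≤ (a + 1) / 2 := by
  refine Finset.sup_le fun w _ ↦ ?_
  obtain ⟨z, hzn, hw⟩ : ∃ z : ℕ, z < n ∧ w = u + ((z : ℤ) : Fin n) :=
    ⟨(w - u).val, (w - u).isLt, by simp⟩
  suffices h : ∃ x y q : ℤ, z - (x + y * a) = n * q ∧ x.natAbs + y.natAbs ≤ (a + 1) / 2 by
    obtain ⟨x, y, q, hz, hxy⟩ := h
    exact hw ▸ (dist_add_le u ⟨q, hz⟩).trans hxy
  by_cases h1 : z ≤ (a + 1) / 2
  · exact ⟨z, 0, 0, by ring, by omega⟩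
  by_cases h2 : z ≤ a + r / 2
  · exact ⟨z - a, 1, 0, by ring, by omega⟩
  by_cases h3 : z < n - (a + 1) / 2
  · exact ⟨z - n + a, -1, 1, by ring, by omega⟩
  · exact ⟨z - n, 0, 1, by ring, by omega⟩

theorem hasBallIndepSet_of_offsets {ι : Type*} [Fintype ι] {z : ι → ℤ} {p : ℕ}
    (hball : ∀ i, ∃ x y : ℤ, (n : ℤ) ∣ z i - (x + y * a) ∧ x.natAbs + y.natAbs ≤ p)
    (hsub : Pairwise fun i j ↦ ∀ e : ℤ, e = 0 ∨ e = 1 ∨ e = a → ¬ (n : ℤ) ∣ z i - z j - e)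
    (v : Fin n) : HasBallIndepSet (circulantGraph n a) v p (Fintype.card ι) := by
  have hne : ∀ {i j} (e : ℤ), e = 0 ∨ e = 1 ∨ e = a → i ≠ j →
      (z i : Fin n) - z j ≠ (e : Fin n) := by
    intro i j e he hij heq
    refine hsub hij e he ((CharP.intCast_eq_zero_iff (Fin n) n _).mp ?_)
    push_cast
    exact sub_eq_zero.mpr heq
  have hdist : ∀ i, (circulantGraph n a).dist v (v + (z i : Fin n)) ≤ p := fun i ↦
    let ⟨_, _, hz, hxy⟩ := hball i
    (dist_add_le v hz).trans hxy
  rw [eq_circulantGraph_pair] at hdist ⊢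
  refine hasBallIndepSet_of_sub_notMem hdist fun i j hij ↦ ?_
  rintro (h | h | h)
  · exact hne 0 (by simp) hij (by simpa using h)
  · exact hne 1 (by simp) hij (by simpa using h)
  · exact hne a (by simp) hij (by simpa using h)

/-- The rows `y = 0` and `y = 1` of the lattice ball carry `2 * p + 1` points in checkerboard
position. One point `(q, -1)` is added; it is the same vertex as `(q + r, 1)`, so `q` is chosen on
the left when `r` is large, which keeps `q + r` below `a`, and on the right when `r` is small, which
takes `q + r` past the row `y = 1`. -/
theorem hasBallIndepSet_checkerboard {r p : ℕ} (hn : n = 2 * a + r) (hr : 2 ≤ r) (hra : r < a)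
    (hp : 1 ≤ p) (hpa : 4 * p ≤ a + 2) (hrp : Even r ∨ 2 * p ≤ r) (v : Fin n) :
    HasBallIndepSet (circulantGraph n a) v p (2 * p + 2) := by
  obtain ⟨q, hq⟩ : ∃ q : ℤ, (2 * p ≤ r ∧ q = -(p - 1)) ∨ (r < 2 * p ∧ r % 2 = 0 ∧ q = p - 1) := by
    rw [Nat.even_iff] at hrp
    rcases le_or_gt (2 * p) r with h | h
    · exact ⟨_, Or.inl ⟨h, rfl⟩⟩
    · exact ⟨_, Or.inr ⟨h, by omega, rfl⟩⟩
  let z : Fin (p + 1) ⊕ Fin p ⊕ Unit → ℤ :=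
    Sum.elim (fun i ↦ 2 * i - p) (Sum.elim (fun i ↦ 2 * i - (p - 1) + a) fun _ ↦ q - a)
  have hball : ∀ i, ∃ x y : ℤ, (n : ℤ) ∣ z i - (x + y * a) ∧ x.natAbs + y.natAbs ≤ p := by
    rintro (i | i | _)
    · exact ⟨2 * i - p, 0, by simp [z], by omega⟩
    · exact ⟨2 * i - (p - 1), 1, by simp [z], by omega⟩
    · exact ⟨q, -1, by simp [z, sub_eq_add_neg], by omega⟩
  have hcard : Fintype.card (Fin (p + 1) ⊕ Fin p ⊕ Unit) = 2 * p + 2 := by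
    simp only [Fintype.card_sum, Fintype.card_fin, Fintype.card_unit]
    ring
  rw [← hcard]
  refine hasBallIndepSet_of_offsets hball ?_ v
  rintro (i | i | _) (j | j | _) hij e he hdvd
  all_goals
    simp only [z, Sum.elim_inl, Sum.elim_inr, ne_eq, Sum.inl.injEq, Sum.inr.injEq, Fin.ext_iff,
      reduceCtorEq, not_true_eq_false, not_false_eq_true] at hij hdvd
  all_goals
    have hcases := eq_zero_or_eq_or_eq_neg_of_dvd hdvd (by omega) (by omega)
    omega

/-- Here `a + b + 1` is an inverse of `2` modulo `n` and `2 * a = -(2 * b + 1)`, so doubling turns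
the jumps `1` and `a` into `2` and `-(2 * b + 1)`. In these coordinates the ball contains a long
interval of integers. Modulo `2 * b + 3` both jumps become `2`, so a `2`-avoiding subset of the
interval is independent. -/
theorem hasBallIndepSet_interval {b p : ℕ} (hn : n = 2 * a + (2 * b + 1)) (hb : 1 ≤ b)
    (hbp : b + 1 ≤ p) (hpa : 3 * p + 1 ≤ a) (v : Fin n) :
    HasBallIndepSet (circulantGraph n a) v p (2 * p + 2) := by
  obtain ⟨M, hMp, hM, hdense⟩ := exists_interval_excess hb hbp
  obtain ⟨T, hTI, hTcard, hTsub⟩ := exists_subset_forall_sub_ne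
    (Finset.Icc (-(2 * p + M : ℤ)) (2 * p + M)) (fun t ↦ (t : ZMod (2 * b + 3)))
    ((ZMod.isUnit_iff_coprime 2 (2 * b + 3)).mpr (by simp))
  have hcard : 2 * p + 2 ≤ Fintype.card T := by
    rw [Int.card_Icc, show (2 * p + M + 1 - -(2 * p + M) : ℤ).toNat = 4 * p + 2 * M + 1 by omega,
      show (2 * b + 3) / 2 = b + 1 by omega] at hTcard
    rw [Fintype.card_coe]
    by_contra! hlt
    nlinarith
  have habs : ∀ t ∈ T, t.natAbs ≤ 2 * p + M := fun t ht ↦ by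
    have := Finset.mem_Icc.mp (hTI ht)
    omega
  refine (hasBallIndepSet_of_offsets (z := fun t : T ↦ t * (a + b + 1)) ?_ ?_ v).mono hcard
  · rintro ⟨t, ht⟩
    obtain ⟨x, y, rfl, hxy⟩ := exists_two_mul_add_mul hb hbp hM (habs t ht)
    refine ⟨x, -y, ⟨x + y * (b + 1), ?_⟩, by simpa using hxy⟩
    simp only [hn]
    push_cast
    ring
  · rintro ⟨i, hi⟩ ⟨j, hj⟩ hij e he hdvd
    have hi' := habs i hi
    have hj' := habs j hj
    have hsmall : (i - j).natAbs + 2 ≤ 2 * a := by omega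
    rw [← sub_mul] at hdvd
    rcases eq_of_dvd_mul_sub hn hsmall he hdvd with h | h | h
    · exact hij (Subtype.ext (sub_eq_zero.mp h))
    · exact hTsub j hj i hi (by rw [← Int.cast_sub, h]; rfl)
    · have hmod : ((2 * b + 3 : ℕ) : ZMod (2 * b + 3)) = 0 := ZMod.natCast_self _
      refine hTsub j hj i hi ?_
      rw [← Int.cast_sub, h]
      push_cast at hmod ⊢
      linear_combination -hmod

theorem hasBallIndepSet_of_le_eccent {r : ℕ} (hn : n = 2 * a + r) (hr : 2 ≤ r) (hra : r < a)
    (v : Fin n) (k : ℕ) (hk : 3 ≤ k) (hkv : k ≤ eccent (circulantGraph n a) v) :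
    HasBallIndepSet (circulantGraph n a) v ((k - 1) / 2) k := by
  have hecc := eccent_le_half hn hra v
  have hkp : k ≤ 2 * ((k - 1) / 2) + 2 := by omega
  by_cases hrp : Even r ∨ 2 * ((k - 1) / 2) ≤ r
  · exact (hasBallIndepSet_checkerboard hn hr hra (by omega) (by omega) hrp v).mono hkp
  · rw [not_or, Nat.not_even_iff_odd] at hrp
    obtain ⟨⟨b, rfl⟩, hlt⟩ := hrp
    exact (hasBallIndepSet_interval hn (by omega) (by omega) (by omega) v).mono hkp

end circulantGraph

theorem stmt7 (n a r : ℕ) (hn : n = 2 * a + r) (ha : 3 ≤ a) (han : a ≤ n / 2)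
    (hr : 2 ≤ r) (hra : r < a) :
    ∃ f : Fin n → ℕ, IsIndepBroadcast (circulantGraph n a) f ∧
      (∑ v, f v) = betaB (circulantGraph n a) ∧ ∀ v, f v ≤ 2 := by
  have : NeZero n := ⟨by omega⟩
  exact exists_isIndepBroadcast_sum_eq_betaB_le_two circulantGraph.connected
    (circulantGraph.hasBallIndepSet_of_le_eccent hn hr hra)
end

section
/- If a and k are integers with a ≥ 5 and k ≥ 2, then β_b(C((a+1)k;1,a)) = α(C((a+1)k;1,a)), and this common value equals ak/2 if a is even, and (a+1)k/2 if a is odd. -/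
/-!
Only broadcasts with values at most two matter: a vertex of value `r ≥ 3` can be replaced by `r`
independent vertices at distance less than `r / 2` from it, each of value one.

Let `A` and `B` be the level sets of the values one and two. Give weight two to every vertex of `A`
and let every vertex of `B` send weight one to each of its four neighbours, so that the total weight
is twice the cost. Adjacent vertices together have weight at most two, so a window
`b, b + 1, …, b + a`, which is a cycle of length `a + 1`, has weight at most `a + 1`. Equality for
even `a` would force all weights in the window to be one; then every inner vertex `x` has `x + a` or
`x - a` in `B`, and two of three consecutive inner vertices make the same choice, which puts two
vertices of `B` too close. Averaging over all windows gives the upper bound.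

For the independent sets, the graph is the grid `ℤ²` modulo a lattice, via `(x, y) ↦ x + a y`. The
grid points with `x + y` even form rotated boxes `p (1 - a) + q (1 + a)`, and the residue modulo
`a + 1` of such a vertex depends on `p` only. Hence boxes that are not too wide are independent. As
`|x| + |y| = max |x + y| |x - y|`, a box with sides at most `ρ + 1` lies within distance `ρ` of its
centre, so two rows or two columns of such a box also supply the replacement in the first step.
-/

open Finset

section CyclicSums

variable {ι : Type*} [AddGroup ι] [Fintype ι] {c : ι} {s : ι → ℕ}

theorem eq_one_of_add_translate_eq_two (hodd : Odd (Fintype.card ι))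
    (h : ∀ i, s i + s (i + c) = 2) (i : ι) : s i = 1 := by
  have hanti : Function.Antiperiodic (fun j => (s j : ℤ) - 1) c := fun j => by
    have := h j
    dsimp only
    omega
  obtain ⟨m, hm⟩ := hodd
  have hself := hanti.odd_nsmul_antiperiodic m i
  rw [← hm, card_nsmul_eq_zero, add_zero] at hself
  omega

theorem sum_le_of_add_translate_le_two (h : ∀ i, s i + s (i + c) ≤ 2)
    (hne : Odd (Fintype.card ι) → ∃ i, s i ≠ 1) : ∑ i, s i ≤ 2 * (Fintype.card ι / 2) := by
  have hdouble : ∑ i, (s i + s (i + c)) = 2 * ∑ i, s i := by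
    have hshift : ∑ i, s (i + c) = ∑ i, s i := Equiv.sum_comp (Equiv.addRight c) s
    rw [sum_add_distrib, hshift, two_mul]
  have htwo : ∑ _i : ι, 2 = 2 * Fintype.card ι := by simp [mul_comm]
  have hle : ∑ i, (s i + s (i + c)) ≤ ∑ _i : ι, 2 := sum_le_sum fun i _ => h i
  rcases Nat.even_or_odd (Fintype.card ι) with heven | hodd
  · have := Nat.two_mul_div_two_of_even heven
    omega
  · obtain ⟨i, hi⟩ := hne hodd
    have hlt : ∑ i, (s i + s (i + c)) ≠ ∑ _i : ι, 2 := fun heq =>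
      hi (eq_one_of_add_translate_eq_two hodd
        (fun j => (sum_eq_sum_iff_of_le fun i _ => h i).1 heq j (mem_univ j)) i)
    have := Nat.two_mul_div_two_add_one_of_odd hodd
    omega

end CyclicSums

section Broadcasts

variable {V : Type*} {G : SimpleGraph V}

theorem dist_le_two_of_adj_adj {u v w : V} (huv : G.Adj u v) (hvw : G.Adj v w) :
    G.dist u w ≤ 2 :=
  SimpleGraph.dist_le (.cons huv (.cons hvw .nil))

/-- The level sets `A` (value one) and `B` (value two) of an independent broadcast on `G` with
values at most two. The bound of the values by the eccentricities is left out, as the upper bound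
on the cost does not depend on it. -/
structure IsOneTwoBroadcast (G : SimpleGraph V) (A B : Finset V) : Prop where
  isIndepSet : G.IsIndepSet A
  two_lt_dist_left : ∀ u ∈ A, ∀ v ∈ B, 2 < G.dist u v
  two_lt_dist_right : ∀ u ∈ B, ∀ v ∈ B, u ≠ v → 2 < G.dist u v

theorem IsIndepBroadcast.one_lt_dist_of_near [Fintype V] {f : V → ℕ} (hf : IsIndepBroadcast G f)
    (hG : G.Connected) {u u' v v' : V} (hne : u ≠ u') (hv : 2 * G.dist u v < f u)
    (hv' : 2 * G.dist u' v' < f u') : 1 < G.dist v v' := by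
  have hsep := hf.2 u u' hne (by omega) (by omega)
  have h₁ : G.dist u u' ≤ G.dist u v + G.dist v u' := hG.dist_triangle
  have h₂ : G.dist v u' ≤ G.dist v v' + G.dist v' u' := hG.dist_triangle
  rw [SimpleGraph.dist_comm (u := v') (v := u')] at h₂
  omega

theorem IsIndepBroadcast.two_lt_dist_of_near [Fintype V] {f : V → ℕ} (hf : IsIndepBroadcast G f)
    (hG : G.Connected) {u u' v : V} (hne : u ≠ u') (hv : 2 * G.dist u v < f u)
    (hu' : f u' = 2) : 2 < G.dist v u' := by
  have hsep := hf.2 u u' hne (by omega) (by omega)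
  have : G.dist u u' ≤ G.dist u v + G.dist v u' := hG.dist_triangle
  omega

theorem IsIndepBroadcast.pairwiseDisjoint_of_near [Fintype V] {f : V → ℕ}
    (hf : IsIndepBroadcast G f) (hG : G.Connected) {S : Set V} {I : V → Finset V}
    (hnear : ∀ u ∈ S, ∀ v ∈ I u, 2 * G.dist u v < f u) : S.PairwiseDisjoint I := by
  refine fun u hu u' hu' hne => disjoint_left.2 fun v hv hv' => ?_
  simpa using hf.one_lt_dist_of_near hG hne (hnear u hu v hv) (hnear u' hu' v hv')

theorem IsIndepBroadcast.isIndepSet_biUnion_of_near [Fintype V] {f : V → ℕ}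
    (hf : IsIndepBroadcast G f) (hG : G.Connected) {S : Set V} {I : V → Finset V}
    (hindep : ∀ u ∈ S, G.IsIndepSet (I u))
    (hnear : ∀ u ∈ S, ∀ v ∈ I u, 2 * G.dist u v < f u) :
    G.IsIndepSet (⋃ u ∈ S, (I u : Set V)) := by
  intro v hv v' hv' hne hadj
  obtain ⟨u, hu, hvu⟩ := Set.mem_iUnion₂.1 hv
  obtain ⟨u', hu', hvu'⟩ := Set.mem_iUnion₂.1 hv'
  rcases eq_or_ne u u' with rfl | huu'
  · exact hindep u hu hvu hvu' hne hadj
  · have := hf.one_lt_dist_of_near hG huu' (hnear u hu v hvu) (hnear u' hu' v' hvu')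
    rw [SimpleGraph.dist_eq_one_iff_adj.2 hadj] at this
    omega

theorem IsIndepBroadcast.exists_isOneTwoBroadcast [Fintype V] {f : V → ℕ}
    (hf : IsIndepBroadcast G f) (hG : G.Connected)
    (hball : ∀ u, 3 ≤ f u →
      ∃ I : Finset V, G.IsIndepSet I ∧ f u ≤ #I ∧ ∀ v ∈ I, 2 * G.dist u v < f u) :
    ∃ A B : Finset V, IsOneTwoBroadcast G A B ∧ ∑ v, f v ≤ #A + 2 * #B := by
  classical
  have hball' : ∀ u, f u ≠ 2 →
      ∃ I : Finset V, G.IsIndepSet I ∧ f u ≤ #I ∧ ∀ v ∈ I, 2 * G.dist u v < f u := by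
    intro u hu
    rcases (by omega : f u = 0 ∨ f u = 1 ∨ 3 ≤ f u) with h | h | h
    · exact ⟨∅, by simp, by simp [h], by simp⟩
    · exact ⟨{u}, by simp, by simp [h], by simp [h]⟩
    · exact hball u h
  choose! I hindep hcard hnear using hball'
  let S : Finset V := {u | f u ≠ 2}
  let B : Finset V := {u | f u = 2}
  have hS : ∀ u, u ∈ S ↔ f u ≠ 2 := by simp [S]
  have hB : ∀ u, u ∈ B ↔ f u = 2 := by simp [B]
  have hnearS : ∀ u ∈ S, ∀ v ∈ I u, 2 * G.dist u v < f u := fun u hu => hnear u ((hS u).1 hu)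
  refine ⟨S.biUnion I, B, ⟨?_, fun v hv u' hu' => ?_, fun u hu v hv hne => ?_⟩, ?_⟩
  · rw [coe_biUnion]
    exact hf.isIndepSet_biUnion_of_near hG (fun u hu => hindep u ((hS u).1 hu)) hnearS
  · obtain ⟨u, hu, hvu⟩ := mem_biUnion.1 hv
    have hne : u ≠ u' := fun h => (hS u).1 hu (h ▸ (hB u').1 hu')
    exact hf.two_lt_dist_of_near hG hne (hnearS u hu v hvu) ((hB u').1 hu')
  · have hfu := (hB u).1 hu
    have hfv := (hB v).1 hv
    have := hf.2 u v hne (by omega) (by omega)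
    omega
  · have hsumB : ∑ u ∈ B, f u = 2 * #B := by
      rw [sum_congr rfl fun u hu => (hB u).1 hu, sum_const, smul_eq_mul, mul_comm]
    calc ∑ v, f v = ∑ u ∈ S, f u + ∑ u ∈ B, f u :=
          (sum_filter_not_add_sum_filter univ (fun u => f u = 2) f).symm
      _ ≤ ∑ u ∈ S, #(I u) + 2 * #B :=
          Nat.add_le_add (sum_le_sum fun u hu => hcard u ((hS u).1 hu)) hsumB.le
      _ = #(S.biUnion I) + 2 * #B := by
          rw [card_biUnion (hf.pairwiseDisjoint_of_near hG hnearS)]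

theorem isIndepBroadcast_indicator [Fintype V] [DecidableEq V] [Nontrivial V] (hG : G.Connected)
    {I : Finset V} (hI : G.IsIndepSet I) :
    IsIndepBroadcast G fun v => if v ∈ I then 1 else 0 := by
  refine ⟨fun v => ?_, fun u v hne hu hv => ?_⟩
  · obtain ⟨w, hw⟩ := exists_ne v
    calc (if v ∈ I then 1 else 0) ≤ 1 := by split_ifs <;> omega
      _ ≤ G.dist v w := hG.pos_dist_of_ne hw.symm
      _ ≤ eccent G v := le_sup (f := G.dist v) (mem_univ w)
  · have huI : u ∈ I := by_contra fun h => by simp [h] at hu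
    have hvI : v ∈ I := by_contra fun h => by simp [h] at hv
    have hpos := hG.pos_dist_of_ne hne
    have hne_one : G.dist u v ≠ 1 := fun h =>
      hI huI hvI hne (SimpleGraph.dist_eq_one_iff_adj.1 h)
    simp only [huI, hvI, if_true]
    omega

theorem betaB_eq_card_and_alphaNum_eq_card [Fintype V] [Nontrivial V] (hG : G.Connected)
    {I : Finset V} (hI : G.IsIndepSet I)
    (hle : ∀ f : V → ℕ, IsIndepBroadcast G f → ∑ v, f v ≤ #I) :
    betaB G = #I ∧ alphaNum G = #I := by
  classical
  have hbeta : IsGreatest {m | ∃ f : V → ℕ, IsIndepBroadcast G f ∧ ∑ v, f v = m} #I := by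
    refine ⟨⟨_, isIndepBroadcast_indicator hG hI, by simp⟩, ?_⟩
    rintro _ ⟨f, hf, rfl⟩
    exact hle f hf
  have halpha : IsGreatest
      {m | ∃ s : Finset V, (∀ u ∈ s, ∀ v ∈ s, ¬ G.Adj u v) ∧ #s = m} #I := by
    refine ⟨⟨I, fun u hu v hv hadj => hI hu hv hadj.ne hadj, rfl⟩, ?_⟩
    rintro _ ⟨s, hs, rfl⟩
    simpa using hle _ (isIndepBroadcast_indicator hG (I := s) fun u hu v hv _ => hs u hu v hv)
  exact ⟨hbeta.csSup_eq, halpha.csSup_eq⟩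

end Broadcasts

section DischargeWeight

variable {V : Type*} [DecidableEq V] {G : SimpleGraph V} [DecidableRel G.Adj] {A B : Finset V}
  {u v w : V}

/-- The weight of `v` after discharging: a vertex of `A` has weight two, and a vertex of `B` sends
weight one to each of its neighbours and keeps nothing. -/
def dischargeWeight (G : SimpleGraph V) [DecidableRel G.Adj] (A B : Finset V) (v : V) : ℕ :=
  (if v ∈ A then 2 else 0) + #{u ∈ B | G.Adj v u}

theorem le_sum_dischargeWeight [Fintype V] {d : ℕ} (hd : ∀ v, d ≤ G.degree v) :
    2 * #A + d * #B ≤ ∑ v, dischargeWeight G A B v := by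
  have hB : ∑ v, #{u ∈ B | G.Adj v u} = ∑ u ∈ B, G.degree u := by
    refine (sum_card_bipartiteAbove_eq_sum_card_bipartiteBelow G.Adj).trans
      (sum_congr rfl fun u _ => ?_)
    rw [← G.card_neighborFinset_eq_degree]
    congr 1
    ext v
    simp [bipartiteBelow, G.adj_comm]
  simp only [dischargeWeight, sum_add_distrib, hB]
  refine Nat.add_le_add (by simp [mul_comm]) ?_
  rw [mul_comm]
  exact card_nsmul_le_sum B _ d fun u _ => hd u

namespace IsOneTwoBroadcast

theorem dischargeWeight_of_mem_left (h : IsOneTwoBroadcast G A B) (hv : v ∈ A) :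
    dischargeWeight G A B v = 2 := by
  have : ∀ u ∈ B, ¬ G.Adj v u := fun u hu hadj => by
    have := h.two_lt_dist_left v hv u hu
    rw [SimpleGraph.dist_eq_one_iff_adj.2 hadj] at this
    omega
  simp [dischargeWeight, hv, filter_false_of_mem this]

theorem dischargeWeight_of_adj_left (h : IsOneTwoBroadcast G A B) (hv : v ∈ A)
    (hadj : G.Adj v w) : dischargeWeight G A B w = 0 := by
  have hw : w ∉ A := fun hw => h.isIndepSet hv hw hadj.ne hadj
  have : ∀ u ∈ B, ¬ G.Adj w u := fun u hu hwu =>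
    (h.two_lt_dist_left v hv u hu).not_ge (dist_le_two_of_adj_adj hadj hwu)
  simp [dischargeWeight, hw, filter_false_of_mem this]

theorem dischargeWeight_of_mem_right (h : IsOneTwoBroadcast G A B) (hv : v ∈ B) :
    dischargeWeight G A B v = 0 := by
  have hvA : v ∉ A := fun hvA => by simpa using h.two_lt_dist_left v hvA v hv
  have : ∀ u ∈ B, ¬ G.Adj v u := fun u hu hadj => by
    have := h.two_lt_dist_right v hv u hu hadj.ne
    rw [SimpleGraph.dist_eq_one_iff_adj.2 hadj] at this
    omega
  simp [dischargeWeight, hvA, filter_false_of_mem this]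

theorem dischargeWeight_le_one (h : IsOneTwoBroadcast G A B) (hv : v ∉ A) :
    dischargeWeight G A B v ≤ 1 := by
  rw [dischargeWeight, if_neg hv, zero_add, card_le_one]
  intro u hu w hw
  rw [mem_filter] at hu hw
  by_contra hne
  exact (h.two_lt_dist_right u hu.1 w hw.1 hne).not_ge (dist_le_two_of_adj_adj hu.2.symm hw.2)

theorem dischargeWeight_add_le_two (h : IsOneTwoBroadcast G A B) (hadj : G.Adj u v) :
    dischargeWeight G A B u + dischargeWeight G A B v ≤ 2 := by
  by_cases hu : u ∈ A
  · rw [h.dischargeWeight_of_mem_left hu, h.dischargeWeight_of_adj_left hu hadj]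
  by_cases hv : v ∈ A
  · rw [h.dischargeWeight_of_mem_left hv, h.dischargeWeight_of_adj_left hv hadj.symm]
  exact Nat.add_le_add (h.dischargeWeight_le_one hu) (h.dischargeWeight_le_one hv)

theorem exists_adj_mem_right (h : IsOneTwoBroadcast G A B) (hv : dischargeWeight G A B v = 1) :
    ∃ u ∈ B, G.Adj v u := by
  have hvA : v ∉ A := fun hvA => by simp [h.dischargeWeight_of_mem_left hvA] at hv
  rw [dischargeWeight, if_neg hvA, zero_add] at hv
  obtain ⟨u, hu⟩ := card_pos.1 (hv ▸ one_pos)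
  exact ⟨u, (mem_filter.1 hu).1, (mem_filter.1 hu).2⟩

end IsOneTwoBroadcast

end DischargeWeight

section Translations

variable {V : Type*} [AddGroup V] {G : SimpleGraph V} {e : V}

theorem exists_walk_add_nsmul (he : ∀ u, G.Adj u (u + e)) (u : V) (m : ℕ) :
    ∃ p : G.Walk u (u + m • e), p.length = m := by
  induction m with
  | zero => exact ⟨.copy .nil rfl (by simp), by simp⟩
  | succ m ih =>
    obtain ⟨p, hp⟩ := ih
    exact ⟨(p.concat (he _)).copy rfl (by rw [succ_nsmul, add_assoc]), by simp [hp]⟩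

theorem dist_add_zsmul_le (he : ∀ u, G.Adj u (u + e)) (u : V) (m : ℤ) :
    G.dist u (u + m • e) ≤ m.natAbs := by
  have hnat (u : V) (m : ℕ) : G.dist u (u + m • e) ≤ m := by
    obtain ⟨p, hp⟩ := exists_walk_add_nsmul he u m
    exact (SimpleGraph.dist_le p).trans_eq hp
  obtain ⟨m, rfl | rfl⟩ := m.eq_nat_or_neg
  · simpa using hnat u m
  · rw [SimpleGraph.dist_comm]
    simpa using hnat (u + (-m : ℤ) • e) m

end Translations

theorem exists_add_mul_eq_sub {t a k : ℕ} (ht : t < (a + 1) * k) :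
    ∃ x y : ℤ, x + y * a = t - (a + 1) * k ∧ x.natAbs + y.natAbs ≤ max a (2 * k) := by
  have hdiv : t / (a + 1) < k := Nat.div_lt_of_lt_mul ht
  have hmod : t % (a + 1) < a + 1 := t.mod_lt a.succ_pos
  have hsum := Nat.mod_add_div t (a + 1)
  generalize t / (a + 1) = q at hdiv hsum
  generalize t % (a + 1) = d at hmod hsum
  refine ⟨d + (q - k), q - k, ?_, by omega⟩
  rw [← hsum]
  push_cast
  ring

section Circulant

open Fin.CommRing

variable {n a : ℕ} [NeZero n]

theorem circulantGraph_adj_iff {u v : Fin n} :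
    (circulantGraph n a).Adj u v ↔
      u ≠ v ∧ ((u + 1 = v ∨ u + a = v) ∨ (v + 1 = u ∨ v + a = u)) := by
  have hval (x y : Fin n) (c : ℕ) : (x.val + c) % n = y.val ↔ x + (c : Fin n) = y := by
    rw [Fin.ext_iff, Fin.val_add, Fin.val_natCast, Nat.add_mod_mod]
  simp only [circulantGraph, SimpleGraph.fromRel_adj, hval, Nat.cast_one]

theorem intCast_fin_inj {x y : ℤ} (h : |x - y| < n) : (x : Fin n) = y ↔ x = y := by
  refine ⟨fun hxy => ?_, congrArg _⟩
  have hdvd : (n : ℤ) ∣ x - y := by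
    rw [← CharP.intCast_eq_zero_iff (Fin n) n, Int.cast_sub, hxy, sub_self]
  exact sub_eq_zero.1 (Int.eq_zero_of_abs_lt_dvd hdvd h)

/-- The steps `±1, ±a` from a vertex of `C(n;1,a)` to its neighbours, as integers. -/
def circulantSteps (a : ℕ) : Finset ℤ := {1, -1, (a : ℤ), -(a : ℤ)}

theorem mem_circulantSteps {e : ℤ} :
    e ∈ circulantSteps a ↔ e = 1 ∨ e = -1 ∨ e = a ∨ e = -a := by
  simp [circulantSteps]

theorem card_circulantSteps (ha : 2 ≤ a) : #(circulantSteps a) = 4 := by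
  rw [circulantSteps, card_insert_of_notMem, card_insert_of_notMem, card_insert_of_notMem,
    card_singleton] <;> simp <;> omega

theorem circulantGraph_adj_iff_exists_step (ha : 0 < a) (han : a < n) {u v : Fin n} :
    (circulantGraph n a).Adj u v ↔ ∃ e ∈ circulantSteps a, v = u + (e : Fin n) := by
  rw [circulantGraph_adj_iff]
  constructor
  · rintro ⟨-, (rfl | rfl) | rfl | rfl⟩
    · exact ⟨1, by simp [mem_circulantSteps], by simp⟩
    · exact ⟨a, by simp [mem_circulantSteps], by simp⟩
    · exact ⟨-1, by simp [mem_circulantSteps], by simp⟩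
    · exact ⟨-a, by simp [mem_circulantSteps], by simp⟩
  · rintro ⟨e, he, rfl⟩
    rw [mem_circulantSteps] at he
    refine ⟨fun h => ?_, ?_⟩
    · have : (e : Fin n) = (0 : ℤ) := by simpa using h
      rw [intCast_fin_inj (by rw [abs_lt]; omega)] at this
      omega
    · rcases he with rfl | rfl | rfl | rfl <;> simp

theorem circulantGraph_adj_add_one (ha : 0 < a) (han : a < n) (u : Fin n) :
    (circulantGraph n a).Adj u (u + 1) :=
  (circulantGraph_adj_iff_exists_step ha han).2 ⟨1, by simp [mem_circulantSteps], by simp⟩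

theorem circulantGraph_adj_add_natCast (ha : 0 < a) (han : a < n) (u : Fin n) :
    (circulantGraph n a).Adj u (u + a) :=
  (circulantGraph_adj_iff_exists_step ha han).2 ⟨a, by simp [mem_circulantSteps], by simp⟩

theorem four_le_degree_circulantGraph [DecidableRel (circulantGraph n a).Adj] (ha : 2 ≤ a)
    (han : 2 * a < n) (u : Fin n) : 4 ≤ (circulantGraph n a).degree u := by
  have hinj : Set.InjOn (fun e : ℤ => u + (e : Fin n)) (circulantSteps a) := by
    intro e he e' he' h
    rw [mem_coe, mem_circulantSteps] at he he'
    exact (intCast_fin_inj (by rw [abs_lt]; omega)).1 (add_left_cancel h)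
  rw [← card_circulantSteps ha, ← card_image_of_injOn hinj,
    ← SimpleGraph.card_neighborFinset_eq_degree]
  refine card_le_card fun v hv => ?_
  obtain ⟨e, he, rfl⟩ := mem_image.1 hv
  exact (SimpleGraph.mem_neighborFinset _ _ _).2
    ((circulantGraph_adj_iff_exists_step (by omega) (by omega)).2 ⟨e, he, rfl⟩)

theorem circulantGraph_connected (ha : 0 < a) (han : a < n) : (circulantGraph n a).Connected := by
  refine SimpleGraph.Connected.mk fun u v => ?_
  obtain ⟨p, -⟩ := exists_walk_add_nsmul (circulantGraph_adj_add_one ha han) u (v - u).val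
  rw [nsmul_one, Fin.cast_val_eq_self, add_sub_cancel] at p
  exact ⟨p⟩

theorem circulantGraph_adj_window (ha : 0 < a) (han : a < n) (b : Fin n) (i : Fin (a + 1)) :
    (circulantGraph n a).Adj (b + (i : ℕ)) (b + ((i + 1 : Fin (a + 1)) : ℕ)) := by
  rw [Fin.val_add_one]
  split_ifs with hi
  · rw [hi, Fin.val_last, Nat.cast_zero, add_zero]
    exact (circulantGraph_adj_add_natCast ha han b).symm
  · rw [Nat.cast_succ, ← add_assoc]
    exact circulantGraph_adj_add_one ha han _

theorem dist_circulantGraph_le (ha : 0 < a) (han : a < n) (u : Fin n) (x y : ℤ) :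
    (circulantGraph n a).dist u (u + x + y * a) ≤ x.natAbs + y.natAbs := by
  have hx := dist_add_zsmul_le (circulantGraph_adj_add_one ha han) u x
  have hy := dist_add_zsmul_le (circulantGraph_adj_add_natCast ha han) (u + x) y
  rw [zsmul_one] at hx
  rw [zsmul_eq_mul] at hy
  exact (circulantGraph_connected ha han).dist_triangle.trans (Nat.add_le_add hx hy)

theorem IsOneTwoBroadcast.add_notMem_right {A B : Finset (Fin n)}
    (h : IsOneTwoBroadcast (circulantGraph n a) A B) (ha : 0 < a) (han : a < n)
    {t : ℤ} (ht : 0 < t) (ht' : t ≤ 2) (htn : t < n) {y : Fin n} (hy : y ∈ B) :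
    y + t ∉ B := fun hyt => by
  have hne : y ≠ y + t := fun heq => by
    have : (t : Fin n) = (0 : ℤ) := by simpa using heq
    rw [intCast_fin_inj (by rw [abs_lt]; omega)] at this
    omega
  have hlt := h.two_lt_dist_right y hy _ hyt hne
  have hle := dist_circulantGraph_le ha han y t 0
  simp only [Int.cast_zero, zero_mul, add_zero, Int.natAbs_zero] at hle
  omega

section UpperBound

variable {A B : Finset (Fin n)} [DecidableRel (circulantGraph n a).Adj]

theorem IsOneTwoBroadcast.add_or_sub_mem (h : IsOneTwoBroadcast (circulantGraph n a) A B)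
    {x : Fin n}
    (hw : ∀ y, y = x - 1 ∨ y = x ∨ y = x + 1 → dischargeWeight (circulantGraph n a) A B y = 1) :
    x + a ∈ B ∨ x - a ∈ B := by
  have hnotMem (y : Fin n) (hy : y = x - 1 ∨ y = x ∨ y = x + 1) : y ∉ B := fun hyB => by
    simpa [h.dischargeWeight_of_mem_right hyB] using hw y hy
  obtain ⟨u, hu, hadj⟩ := h.exists_adj_mem_right (hw x (by simp))
  rcases (circulantGraph_adj_iff.1 hadj).2 with (rfl | rfl) | rfl | rfl
  · exact absurd hu (hnotMem _ (by simp))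
  · exact .inl hu
  · exact absurd hu (hnotMem _ (by simp))
  · exact .inr (by simpa using hu)

theorem IsOneTwoBroadcast.exists_dischargeWeight_ne_one
    (h : IsOneTwoBroadcast (circulantGraph n a) A B) (ha : 2 ≤ a) (han : a < n) (b : Fin n) :
    ∃ i < 5, dischargeWeight (circulantGraph n a) A B (b + (i : ℕ)) ≠ 1 := by
  by_contra! hw
  have hside (j : ℕ) (hj : j < 3) : b + (j + 1 : ℕ) + a ∈ B ∨ b + (j + 1 : ℕ) + -a ∈ B := by
    rw [← sub_eq_add_neg]
    refine h.add_or_sub_mem ?_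
    rintro y (rfl | rfl | rfl)
    · rw [Nat.cast_succ, ← add_assoc, add_sub_cancel_right]
      exact hw j (by omega)
    · exact hw (j + 1) (by omega)
    · rw [add_assoc, ← Nat.cast_succ]
      exact hw (j + 2) (by omega)
  have hclash (e : Fin n) {i j : ℕ} (hij : i < j) (hj : j < 3) (hi : b + (i + 1 : ℕ) + e ∈ B) :
      b + (j + 1 : ℕ) + e ∉ B := by
    have heq : b + (j + 1 : ℕ) + e = b + (i + 1 : ℕ) + e + ((j - i : ℤ) : Fin n) := by
      push_cast
      ring
    rw [heq]
    exact h.add_notMem_right (by omega) han (by omega) (by omega) (by omega) hi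
  rcases hside 0 (by simp) with h₀ | h₀ <;> rcases hside 1 (by simp) with h₁ | h₁ <;>
    rcases hside 2 (by simp) with h₂ | h₂ <;>
    first
      | exact hclash _ (by simp) (by simp) h₀ h₁
      | exact hclash _ (by simp) (by simp) h₀ h₂
      | exact hclash _ (by simp) (by simp) h₁ h₂

theorem IsOneTwoBroadcast.sum_window_dischargeWeight_le
    (h : IsOneTwoBroadcast (circulantGraph n a) A B) (ha : 3 ≤ a) (han : a < n) (b : Fin n) :
    ∑ i : Fin (a + 1), dischargeWeight (circulantGraph n a) A B (b + (i : ℕ)) ≤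
      2 * ((a + 1) / 2) := by
  have hne (hodd : Odd (Fintype.card (Fin (a + 1)))) :
      ∃ i : Fin (a + 1), dischargeWeight (circulantGraph n a) A B (b + (i : ℕ)) ≠ 1 := by
    obtain ⟨i, hi, hne⟩ := h.exists_dischargeWeight_ne_one (by omega) han b
    rw [Fintype.card_fin, Nat.odd_iff] at hodd
    exact ⟨⟨i, by omega⟩, hne⟩
  simpa only [Fintype.card_fin] using sum_le_of_add_translate_le_two (c := 1)
    (fun i => h.dischargeWeight_add_le_two (circulantGraph_adj_window (by omega) han b i)) hne

end UpperBound

theorem IsOneTwoBroadcast.cost_le {A B : Finset (Fin n)}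
    (h : IsOneTwoBroadcast (circulantGraph n a) A B) (ha : 3 ≤ a) (han : 2 * a < n) :
    (a + 1) * (#A + 2 * #B) ≤ n * ((a + 1) / 2) := by
  classical
  let w := dischargeWeight (circulantGraph n a) A B
  have hcost : 2 * #A + 4 * #B ≤ ∑ b, w b :=
    le_sum_dischargeWeight (four_le_degree_circulantGraph (by omega) han)
  have hshift (i : Fin (a + 1)) : ∑ b, w (b + (i : ℕ)) = ∑ b, w b :=
    Equiv.sum_comp (Equiv.addRight ((i : ℕ) : Fin n)) w
  have hwindows : (a + 1) * ∑ b, w b ≤ n * (2 * ((a + 1) / 2)) :=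
    calc (a + 1) * ∑ b, w b = ∑ i : Fin (a + 1), ∑ b, w (b + (i : ℕ)) := by simp [hshift]
      _ = ∑ b, ∑ i : Fin (a + 1), w (b + (i : ℕ)) := sum_comm
      _ ≤ ∑ _b : Fin n, 2 * ((a + 1) / 2) :=
          sum_le_sum fun b _ => h.sum_window_dischargeWeight_le ha (by omega) b
      _ = n * (2 * ((a + 1) / 2)) := by simp
  refine Nat.le_of_mul_le_mul_left ?_ two_pos
  calc 2 * ((a + 1) * (#A + 2 * #B)) = (a + 1) * (2 * #A + 4 * #B) := by ring
    _ ≤ (a + 1) * ∑ b, w b := Nat.mul_le_mul_left _ hcost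
    _ ≤ n * (2 * ((a + 1) / 2)) := hwindows
    _ = 2 * (n * ((a + 1) / 2)) := by ring

section Boxes

variable {u v : Fin n} {m l : ℕ}

/-- The vertices `u + p (1 - a) + q (1 + a)` of `C(n;1,a)` with `p < m` and `q < l`: an `m × l` box
with corner `u`, rotated by 45 degrees, in the grid of which the graph is a quotient. -/
def circulantBox (a : ℕ) (u : Fin n) (m l : ℕ) : Finset (Fin n) :=
  (range m ×ˢ range l).image fun p => u + p.1 * (1 - a) + p.2 * (1 + a)

theorem mem_circulantBox :
    v ∈ circulantBox a u m l ↔ ∃ p < m, ∃ q < l, v = u + p * (1 - a) + q * (1 + a) := by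
  simp only [circulantBox, mem_image, mem_product, mem_range, Prod.exists, eq_comm (b := v)]
  grind

theorem succ_dvd_two_mul_sub_add (hn : a + 1 ∣ n) {p q p' q' : ℕ} {e : ℤ}
    (h : u + p * (1 - a) + q * (1 + a) + e = u + p' * (1 - a) + q' * (1 + a)) :
    (a + 1 : ℤ) ∣ 2 * (p - p') + e := by
  have hdvd : (n : ℤ) ∣ (p - p') * (1 - a) + (q - q') * (1 + a) + e := by
    rw [← CharP.intCast_eq_zero_iff (Fin n) n]
    push_cast
    linear_combination h
  obtain ⟨c, hc⟩ := (Int.natCast_dvd_natCast.2 hn).trans hdvd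
  push_cast at hc
  exact ⟨c + (p - p') - (q - q'), by linear_combination hc⟩

theorem isIndepSet_circulantBox (hn : a + 1 ∣ n) (ha : 0 < a) (han : a < n) (hm : 2 * m ≤ a + 1) :
    (circulantGraph n a).IsIndepSet (circulantBox a u m l) := by
  intro v hv v' hv' _ hadj
  obtain ⟨p, hp, q, -, rfl⟩ := mem_circulantBox.1 hv
  obtain ⟨p', hp', q', -, rfl⟩ := mem_circulantBox.1 hv'
  obtain ⟨e, he, heq⟩ := (circulantGraph_adj_iff_exists_step ha han).1 hadj
  have hdvd := succ_dvd_two_mul_sub_add hn heq.symm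
  have hodd (s : ℤ) (hs : s = 1 ∨ s = -1) : ¬ (a + 1 : ℤ) ∣ 2 * (p - p') + s := fun h => by
    have := Int.eq_zero_of_abs_lt_dvd h (by rw [abs_lt]; omega)
    omega
  obtain ⟨c, hc⟩ := hdvd
  rcases mem_circulantSteps.1 he with rfl | rfl | rfl | rfl
  · exact hodd 1 (by simp) ⟨c, hc⟩
  · exact hodd (-1) (by simp) ⟨c, hc⟩
  · exact hodd (-1) (by simp) ⟨c - 1, by linear_combination hc⟩
  · exact hodd 1 (by simp) ⟨c + 1, by linear_combination hc⟩

theorem card_circulantBox {k : ℕ} (hn : n = (a + 1) * k) (hm : 2 * m ≤ a + 1) (hl : l ≤ k) :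
    #(circulantBox a u m l) = m * l := by
  rw [circulantBox, card_image_of_injOn, card_product, card_range, card_range]
  rintro ⟨p, q⟩ hpq ⟨p', q'⟩ hpq' heq
  simp only [coe_product, coe_range, Set.mem_prod, Set.mem_Iio] at hpq hpq' heq
  obtain rfl : p = p' := by
    have := succ_dvd_two_mul_sub_add (e := 0) ⟨k, hn⟩ (by simpa using heq)
    have := Int.eq_zero_of_abs_lt_dvd this (by rw [abs_lt]; omega)
    omega
  have hdvd : (n : ℤ) ∣ (a + 1) * (q - q') := by
    rw [← CharP.intCast_eq_zero_iff (Fin n) n]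
    push_cast
    linear_combination heq
  rw [hn, Nat.cast_mul, Nat.cast_succ, mul_dvd_mul_iff_left (by omega)] at hdvd
  have := Int.eq_zero_of_abs_lt_dvd hdvd (by rw [abs_lt]; omega)
  simp only [Prod.mk.injEq, true_and]
  omega

theorem dist_le_of_mem_circulantBox (ha : 0 < a) (han : a < n) {r : ℕ} (hm : m ≤ r + 1)
    (hl : l ≤ r + 1) (hv : v ∈ circulantBox a (u - (r : Fin n)) m l) :
    (circulantGraph n a).dist u v ≤ r := by
  obtain ⟨p, hp, q, hq, rfl⟩ := mem_circulantBox.1 hv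
  have hdist := dist_circulantGraph_le ha han u (p + q - r) (q - p)
  have hcoord : u - (r : Fin n) + p * (1 - a) + q * (1 + a) =
      u + ((p + q - r : ℤ) : Fin n) + ((q - p : ℤ) : Fin n) * a := by
    push_cast
    ring
  rw [hcoord]
  omega

theorem dist_circulantGraph_le_max {k : ℕ} (hn : n = (a + 1) * k) (ha : 0 < a) (han : a < n)
    (u v : Fin n) : (circulantGraph n a).dist u v ≤ max a (2 * k) := by
  obtain ⟨x, y, hxy, hle⟩ := exists_add_mul_eq_sub ((v - u).isLt.trans_eq hn)
  have hsub : ((x + y * a : ℤ) : Fin n) = v - u := by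
    rw [hxy, ← Nat.cast_succ, ← Nat.cast_mul, ← hn]
    simp
  have hv : v = u + (x : Fin n) + (y : Fin n) * a := by
    push_cast at hsub
    linear_combination -hsub
  have := dist_circulantGraph_le ha han u x y
  rw [← hv] at this
  exact this.trans hle

theorem exists_isIndepSet_dist_lt {k r : ℕ} (hn : n = (a + 1) * k) (ha : 3 ≤ a) (hk : 2 ≤ k)
    (u : Fin n) (hr : 3 ≤ r) (hrak : r ≤ max a (2 * k)) :
    ∃ I : Finset (Fin n), (circulantGraph n a).IsIndepSet I ∧ r ≤ #I ∧
      ∀ v ∈ I, 2 * (circulantGraph n a).dist u v < r := by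
  have han : a < n := by nlinarith
  obtain ⟨m, l, hm, hl, hml, hmr, hlr⟩ : ∃ m l, 2 * m ≤ a + 1 ∧ l ≤ k ∧ r ≤ m * l ∧
      m ≤ (r - 1) / 2 + 1 ∧ l ≤ (r - 1) / 2 + 1 := by
    rcases le_or_gt r (2 * k) with h | h
    · exact ⟨2, (r - 1) / 2 + 1, by omega⟩
    · exact ⟨(r - 1) / 2 + 1, 2, by omega⟩
  refine ⟨circulantBox a (u - ((r - 1) / 2 : ℕ)) m l,
    isIndepSet_circulantBox ⟨k, hn⟩ (by omega) han hm,
    hml.trans_eq (card_circulantBox hn hm hl).symm, fun v hv => ?_⟩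
  have := dist_le_of_mem_circulantBox (by omega) han hmr hlr hv
  omega

end Boxes

theorem betaB_eq_and_alphaNum_eq {k : ℕ} (hn : n = (a + 1) * k) (ha : 3 ≤ a) (hk : 2 ≤ k) :
    betaB (circulantGraph n a) = (a + 1) / 2 * k ∧
      alphaNum (circulantGraph n a) = (a + 1) / 2 * k := by
  have han : 2 * a < n := by nlinarith
  have : Nontrivial (Fin n) := Fin.nontrivial_iff_two_le.2 (by omega)
  have hconn := circulantGraph_connected (by omega : 0 < a) (by omega : a < n)
  rw [← card_circulantBox (u := 0) hn (by omega : 2 * ((a + 1) / 2) ≤ a + 1) le_rfl]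
  refine betaB_eq_card_and_alphaNum_eq_card hconn
    (isIndepSet_circulantBox ⟨k, hn⟩ (by omega) (by omega) (by omega)) fun f hf => ?_
  obtain ⟨A, B, hAB, hle⟩ := hf.exists_isOneTwoBroadcast hconn fun u hu =>
    exists_isIndepSet_dist_lt hn ha hk u hu <| (hf.1 u).trans <|
      Finset.sup_le fun v _ => dist_circulantGraph_le_max hn (by omega) (by omega) u v
  rw [card_circulantBox hn (by omega) le_rfl]
  have hcost := hAB.cost_le ha han
  calc ∑ v, f v ≤ #A + 2 * #B := hle
    _ ≤ k * ((a + 1) / 2) := by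
      refine Nat.le_of_mul_le_mul_left (hcost.trans_eq ?_) a.succ_pos
      rw [← mul_assoc, ← hn]
    _ = (a + 1) / 2 * k := mul_comm _ _

end Circulant

theorem stmt19_general (a k : ℕ) (ha : 3 ≤ a) (hk : 2 ≤ k) :
    betaB (circulantGraph ((a + 1) * k) a) = alphaNum (circulantGraph ((a + 1) * k) a) ∧
    (Even a → betaB (circulantGraph ((a + 1) * k) a) = a * k / 2) ∧
    (Odd a → betaB (circulantGraph ((a + 1) * k) a) = (a + 1) * k / 2) := by
  have : NeZero ((a + 1) * k) := ⟨by positivity⟩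
  obtain ⟨hbeta, halpha⟩ := betaB_eq_and_alphaNum_eq rfl ha hk
  refine ⟨hbeta.trans halpha.symm, fun heven => hbeta.trans ?_, fun hodd => hbeta.trans ?_⟩
  · rw [Nat.mul_div_right_comm heven.two_dvd, Nat.succ_div_of_not_dvd]
    have := heven.two_dvd
    omega
  · rw [Nat.mul_div_right_comm hodd.add_one.two_dvd]

theorem stmt19 (a k : ℕ) (ha : 5 ≤ a) (hk : 2 ≤ k) :
    betaB (circulantGraph ((a + 1) * k) a) = alphaNum (circulantGraph ((a + 1) * k) a) ∧
    (Even a → betaB (circulantGraph ((a + 1) * k) a) = a * k / 2) ∧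
    (Odd a → betaB (circulantGraph ((a + 1) * k) a) = (a + 1) * k / 2) :=
  stmt19_general a k (by omega) hk
end
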